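/- arXiv:2107.12126 — 2 statements merged into one kernel-verified Lean document; each statement's English description precedes it below -/
import Mathlib

section
/- If (G, σ) is a signed 2-degenerate simple graph on n vertices where n is even and n ≥ 2, then χ_c(G, σ) ≤ 4 − 4/n. -/
/-!
The idea is to colour first at `r = 4`, strictly, and then to lower `r` by an
integrality argument.

*Strict colouring at `r = 4`.* Removing a vertex of degree at most two and inducting,
there are reals `x v`, no two of which differ by a multiple of `2`, such that every edge `uv` has
an integer `k`, even for a positive and odd for a negative edge, with
`2 k + 1 < x v - x u < 2 k + 3` (`exists_strict_coloring`). On the circle `ℝ / 4ℤ` each coloured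
neighbour forbids a closed half circle; by genericity the (at most two) half circles are
not opposite, so a nonempty open set of values remains, and it contains generic ones
(`exists_extension`).

*Lowering `r`.* Fix these integers `k u v`. A circular `2ρ`-colouring arises from any `p` with
`p u + (k u v * ρ + 1) ≤ p v` for all arcs `u → v`, reduced modulo `2ρ`
(`hasCircularColoring_of_potential`). Such a `p` exists as soon as every simple directed cycle has
nonpositive weight, by taking longest simple paths (`exists_potential`). A cycle of length `L`
with sum of integers `K` satisfies `2 K + L < 0`, as seen by summing the strict
inequalities for `x`. Since `K` and `L ≤ n` are integers and `n` is even, this forces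
`ρ K + L ≤ 0` for `ρ = 2 - 2 / n` (`cycle_weight_nonpos`), and `2ρ = 4 - 4 / n`.
-/


open scoped ENNReal

/-- A circular `r`-coloring of the signed graph `(G, σ)` (`σ e = true` meaning the edge `e`
is positive): a map `f : V → [0, r)` such that positive edges `uv` satisfy
`1 ≤ |f u - f v| ≤ r - 1` and negative edges satisfy
`|f u - f v| ≤ r/2 - 1` or `|f u - f v| ≥ r/2 + 1`. -/
def IsCircularColoring {V : Type*} (G : SimpleGraph V) (σ : Sym2 V → Bool) (r : ℝ)
    (f : V → ℝ) : Prop :=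
  (∀ v, 0 ≤ f v ∧ f v < r) ∧
  ∀ u v, G.Adj u v →
    (if σ s(u, v) then 1 ≤ |f u - f v| ∧ |f u - f v| ≤ r - 1
     else |f u - f v| ≤ r / 2 - 1 ∨ r / 2 + 1 ≤ |f u - f v|)

def HasCircularColoring {V : Type*} (G : SimpleGraph V) (σ : Sym2 V → Bool) (r : ℝ) : Prop :=
  ∃ f : V → ℝ, IsCircularColoring G σ r f

/-- The circular chromatic number of a signed graph, as an element of `ℝ≥0∞`:
the infimum of all real numbers `r ≥ 2` admitting a circular `r`-coloring
(`⊤` if there is none). -/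
noncomputable def circChrom {V : Type*} (G : SimpleGraph V) (σ : Sym2 V → Bool) : ℝ≥0∞ :=
  sInf (ENNReal.ofReal '' {r : ℝ | 2 ≤ r ∧ HasCircularColoring G σ r})

/-- A graph is planar if it has an embedding in the plane: points for vertices and
injective continuous arcs for edges, where an arc joins the endpoints of its edge,
the interior of an arc avoids all vertex points, and two distinct arcs meet only
at vertex points (hence only at common endpoints). -/
def IsPlanar {V : Type*} (G : SimpleGraph V) : Prop :=
  ∃ (p : V → ℝ × ℝ) (γ : Sym2 V → unitInterval → ℝ × ℝ),
    Function.Injective p ∧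
    (∀ e ∈ G.edgeSet, Continuous (γ e) ∧ Function.Injective (γ e)) ∧
    (∀ u v, G.Adj u v → ({γ s(u, v) 0, γ s(u, v) 1} : Set (ℝ × ℝ)) = {p u, p v}) ∧
    (∀ e ∈ G.edgeSet, ∀ t : unitInterval, t ≠ 0 → t ≠ 1 → γ e t ∉ Set.range p) ∧
    (∀ e ∈ G.edgeSet, ∀ e' ∈ G.edgeSet, e ≠ e' → ∀ s t : unitInterval,
      γ e s = γ e' t → γ e s ∈ Set.range p)

/-- A graph is bipartite if its vertex set splits into a part `A` and its complement
such that every edge joins the two parts. -/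
def IsBipartiteGraph {V : Type*} (G : SimpleGraph V) : Prop :=
  ∃ A : Set V, ∀ u v, G.Adj u v → (u ∈ A ↔ v ∉ A)

/-- A graph is 2-degenerate if every nonempty (induced) subgraph has a vertex of
degree at most 2 in it. -/
def TwoDegenerate {V : Type*} (G : SimpleGraph V) : Prop :=
  ∀ s : Set V, s.Nonempty → ∃ v ∈ s, ({u ∈ s | G.Adj v u}).ncard ≤ 2

/-! ### Strict generic colourings at `r = 4` -/

/-- The integer `k` has the parity prescribed by the sign: even for a positive edge (`true`), odd
for a negative one (`false`). -/
def SignParity (b : Bool) (k : ℤ) : Prop := if b then Even k else Odd k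

/-- Two open half circles of `ℝ / 4ℤ`, centred at the antipodes of `a` and `b`, meet
outside any countable set unless `a` and `b` are antipodal. -/
lemma exists_extension (a b : ℝ) (hab : ∀ m : ℤ, b - a ≠ 4 * m + 2) (C : Set ℝ)
    (hC : C.Countable) :
    ∃ y, y ∉ C ∧ (∃ m : ℤ, 4 * (m : ℝ) + 1 < y - a ∧ y - a < 4 * m + 3) ∧
      ∃ m : ℤ, 4 * (m : ℝ) + 1 < y - b ∧ y - b < 4 * m + 3 := by
  -- The representative of `b` modulo `4` at distance less than `2` from `a`.
  set q : ℤ := ⌊(b - a + 2) / 4⌋ with hq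
  have h1 : (q : ℝ) ≤ (b - a + 2) / 4 := Int.floor_le _
  have h2 : (b - a + 2) / 4 < q + 1 := Int.lt_floor_add_one _
  have h3 := hab (q - 1)
  push_cast at h3
  have h4 : (q : ℝ) < (b - a + 2) / 4 := by
    refine lt_of_le_of_ne h1 fun h => h3 ?_
    linarith
  have hlt : max a (b - 4 * q) + 1 < min a (b - 4 * q) + 3 := by
    rcases le_total a (b - 4 * q) with h | h
    · rw [max_eq_right h, min_eq_left h]; linarith
    · rw [max_eq_left h, min_eq_right h]; linarith
  obtain ⟨y, hyC, hy1, hy2⟩ := (hC.dense_compl ℝ).exists_between hlt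
  have := le_max_left a (b - 4 * q)
  have := le_max_right a (b - 4 * q)
  have := min_le_left a (b - 4 * q)
  have := min_le_right a (b - 4 * q)
  refine ⟨y, hyC, ⟨0, ?_, ?_⟩, ⟨-q, ?_, ?_⟩⟩ <;> push_cast <;> linarith

/-- The real number `d` is an admissible strict difference at `r = 4` along an edge of sign `b`. -/
def StrictDiff (b : Bool) (d : ℝ) : Prop :=
  ∃ k : ℤ, SignParity b k ∧ 2 * (k : ℝ) + 1 < d ∧ d < 2 * k + 3

lemma StrictDiff.neg {b : Bool} {d : ℝ} (h : StrictDiff b d) : StrictDiff b (-d) := by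
  obtain ⟨k, hk, h1, h2⟩ := h
  refine ⟨-k - 2, ?_, ?_, ?_⟩
  · unfold SignParity at *
    split_ifs at * with hb
    · obtain ⟨j, rfl⟩ := hk; exact ⟨-j - 1, by ring⟩
    · obtain ⟨j, rfl⟩ := hk; exact ⟨-j - 2, by ring⟩
  · push_cast; linarith
  · push_cast; linarith

/-- An edge of negative sign to a vertex of colour `c` acts as a positive edge to the antipode
`c + 2`. -/
lemma strictDiff_of_shift {b : Bool} {y c : ℝ}
    (h : ∃ m : ℤ, 4 * (m : ℝ) + 1 < y - (c + if b then 0 else 2) ∧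
      y - (c + if b then 0 else 2) < 4 * m + 3) : StrictDiff b (y - c) := by
  obtain ⟨m, h1, h2⟩ := h
  cases b
  · refine ⟨2 * m + 1, by simp [SignParity], ?_, ?_⟩ <;> push_cast <;> simp at h1 h2 <;> linarith
  · refine ⟨2 * m, by simp [SignParity], ?_, ?_⟩ <;> push_cast <;> simp at h1 h2 <;> linarith

/-- A 2-degenerate signed graph has a generic strict circular `4`-colouring. -/
lemma exists_strict_coloring {V : Type*} [Finite V] (G : SimpleGraph V) (σ : Sym2 V → Bool)
    (hdeg : TwoDegenerate G) (s : Finset V) :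
    ∃ x : V → ℝ, (∀ u ∈ s, ∀ v ∈ s, u ≠ v → ∀ m : ℤ, x v - x u ≠ 2 * m) ∧
      ∀ u ∈ s, ∀ v ∈ s, G.Adj u v → StrictDiff (σ s(u, v)) (x v - x u) := by
  classical
  induction s using Finset.strongInduction with
  | H s ih =>
  rcases s.eq_empty_or_nonempty with rfl | hs
  · exact ⟨0, by simp, by simp⟩
  obtain ⟨v, hv, hcard⟩ := hdeg (s : Set V) (by simpa using hs)
  have hv : v ∈ s := by simpa using hv
  obtain ⟨x, hgen, hcol⟩ := ih (s.erase v) (Finset.erase_ssubset hv)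
  let c : V → ℝ := fun u => x u + if σ s(u, v) then 0 else 2
  let C : Set ℝ := ⋃ u : V, ⋃ m : ℤ, {x u + 2 * m}
  have hC : C.Countable :=
    Set.countable_iUnion fun u => Set.countable_iUnion fun m => Set.countable_singleton _
  -- The neighbours of `v` impose at most two constraints, with nonantipodal centres.
  obtain ⟨a, b, hab, hN⟩ : ∃ a b : ℝ, (∀ m : ℤ, b - a ≠ 4 * m + 2) ∧
      ∀ u ∈ s, G.Adj v u → c u = a ∨ c u = b := by
    set N : Set V := {u ∈ (s : Set V) | G.Adj v u} with hNdef
    have hself : ∀ a : ℝ, ∀ m : ℤ, a - a ≠ 4 * m + 2 := by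
      intro a m h
      have h' : (0 : ℝ) = ((4 * m + 2 : ℤ) : ℝ) := by push_cast; linarith
      have : (0 : ℤ) = 4 * m + 2 := by exact_mod_cast h'
      omega
    have hmem : ∀ u, u ∈ N ↔ u ∈ s ∧ G.Adj v u := by intro u; simp [hNdef]
    have hcases : N.ncard = 0 ∨ N.ncard = 1 ∨ N.ncard = 2 := by omega
    rcases hcases with h | h | h
    · rw [Set.ncard_eq_zero (Set.toFinite _)] at h
      refine ⟨0, 0, hself 0, fun u hu huv => ?_⟩
      have := (hmem u).2 ⟨hu, huv⟩
      simp [h] at this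
    · obtain ⟨w, hw⟩ := Set.ncard_eq_one.1 h
      refine ⟨c w, c w, hself _, fun u hu huv => ?_⟩
      have := (hmem u).2 ⟨hu, huv⟩
      rw [hw, Set.mem_singleton_iff] at this
      simp [this]
    · obtain ⟨w, w', hne, hw⟩ := Set.ncard_eq_two.1 h
      have hw1 := (hmem w).1 (by simp [hw])
      have hw2 := (hmem w').1 (by simp [hw])
      refine ⟨c w, c w', fun m h => ?_, fun u hu huv => ?_⟩
      · have hg := hgen w (Finset.mem_erase.2 ⟨hw1.2.ne', hw1.1⟩) w'
          (Finset.mem_erase.2 ⟨hw2.2.ne', hw2.1⟩) hne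
        simp only [c] at h
        split_ifs at h
        · exact hg (2 * m + 1) (by push_cast; linarith)
        · exact hg (2 * m + 2) (by push_cast; linarith)
        · exact hg (2 * m) (by push_cast; linarith)
        · exact hg (2 * m + 1) (by push_cast; linarith)
      · have := (hmem u).2 ⟨hu, huv⟩
        rw [hw] at this
        rcases this with rfl | rfl <;> simp
  obtain ⟨y, hyC, hya, hyb⟩ := exists_extension a b hab C hC
  have hyu : ∀ u, ∀ m : ℤ, y - x u ≠ 2 * m := by
    intro u m h
    refine hyC (Set.mem_iUnion.2 ⟨u, Set.mem_iUnion.2 ⟨m, ?_⟩⟩)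
    rw [Set.mem_singleton_iff]; linarith
  have hvu : ∀ u ∈ s, G.Adj v u → StrictDiff (σ s(u, v)) (y - x u) := by
    intro u hu huv
    apply strictDiff_of_shift
    rcases hN u hu huv with h | h
    · rw [← h] at hya; exact hya
    · rw [← h] at hyb; exact hyb
  refine ⟨Function.update x v y, ?_, ?_⟩
  · intro u hu w hw hne m
    by_cases h1 : u = v
    · subst h1
      rw [Function.update_self, Function.update_of_ne hne.symm]
      intro h
      exact hyu w (-m) (by push_cast; linarith)
    · by_cases h2 : w = v
      · subst h2
        rw [Function.update_self, Function.update_of_ne hne]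
        exact hyu u m
      · rw [Function.update_of_ne h1, Function.update_of_ne h2]
        exact hgen u (Finset.mem_erase.2 ⟨h1, hu⟩) w (Finset.mem_erase.2 ⟨h2, hw⟩) hne m
  · intro u hu w hw hadj
    by_cases h1 : u = v
    · subst h1
      rw [Function.update_self, Function.update_of_ne hadj.ne']
      have := (hvu w hw hadj).neg
      rwa [neg_sub, Sym2.eq_swap] at this
    · by_cases h2 : w = v
      · subst h2
        rw [Function.update_self, Function.update_of_ne hadj.ne]
        exact hvu u hu hadj.symm
      · rw [Function.update_of_ne h1, Function.update_of_ne h2]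
        exact hcol u (Finset.mem_erase.2 ⟨h1, hu⟩) w (Finset.mem_erase.2 ⟨h2, hw⟩) hadj

/-! ### Longest simple paths and difference constraints -/

/-- The sum of `k` over the arcs of a directed path; the list gives its vertices from the
last one back to the first. -/
def pathSum {V : Type*} (k : V → V → ℤ) : List V → ℤ
  | [] => 0
  | [_] => 0
  | v :: u :: l => k u v + pathSum k (u :: l)

lemma pathSum_append {V : Type*} (k : V → V → ℤ) (v : V) (l₂ : List V) :
    ∀ l₁ : List V, pathSum k (l₁ ++ v :: l₂) = pathSum k (l₁ ++ [v]) + pathSum k (v :: l₂)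
  | [] => by simp [pathSum]
  | [a] => by simp [pathSum]
  | a :: b :: l => by
    have := pathSum_append k v l₂ (b :: l)
    simp only [List.cons_append, pathSum] at this ⊢
    rw [this]; ring

/-- A system of difference constraints `p u + (k u v * ρ + 1) ≤ p v` over the arcs of `R` is
solvable if every simple directed cycle has nonpositive weight. The cycle
runs from `v` along the reversed list `u :: l ++ [v]` to `u`, and back by the arc `u → v`.
The value `p u` is the largest weight of a simple path ending at `u`. -/
lemma exists_potential {V : Type*} [Fintype V] (R : V → V → Prop) (hR : ∀ u, ¬ R u u)
    (k : V → V → ℤ) (ρ : ℝ)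
    (hcyc : ∀ u v l, (u :: l ++ [v]).Nodup → (u :: l ++ [v]).IsChain (fun a b => R b a) → R u v →
      ρ * ((pathSum k (u :: l ++ [v]) + k u v : ℤ) : ℝ) + ((l.length : ℝ) + 2) ≤ 0) :
    ∃ p : V → ℝ, ∀ u v, R u v → p u + (k u v * ρ + 1) ≤ p v := by
  classical
  let wt : List V → ℝ := fun l => ρ * pathSum k l + l.length
  let S : V → Set (List V) := fun u =>
    {l | l.Nodup ∧ l.IsChain (fun a b => R b a) ∧ l.head? = some u}
  have hfin : ∀ u, (S u).Finite := fun u =>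
    (Set.finite_coe_iff.1
      (inferInstanceAs (Finite {l : List V // l.Nodup}))).subset fun l hl => hl.1
  have hmax : ∀ u, ∃ l ∈ S u, ∀ l' ∈ S u, wt l' ≤ wt l := fun u =>
    Set.exists_max_image (S u) wt (hfin u) ⟨[u], by simp [S]⟩
  choose P hP hPmax using hmax
  refine ⟨fun u => wt (P u), fun u v huv => ?_⟩
  obtain ⟨hnd, hch, hhd⟩ := hP u
  have hmx := hPmax v
  obtain ⟨l, hl⟩ : ∃ l, P u = u :: l := List.head?_eq_some_iff.1 hhd
  simp only
  rw [hl] at hnd hch ⊢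
  by_cases hmem : v ∈ u :: l
  · -- The arc closes a cycle; cutting it off leaves a path ending at `v`.
    have huv' : v ≠ u := fun h => hR u (h ▸ huv)
    have hvl : v ∈ l := (List.mem_cons.1 hmem).resolve_left huv'
    obtain ⟨l₁, l₂, rfl⟩ := List.append_of_mem hvl
    have hsplit : u :: (l₁ ++ v :: l₂) = (u :: l₁ ++ [v]) ++ l₂ := by simp
    have hsplit' : u :: (l₁ ++ v :: l₂) = (u :: l₁) ++ (v :: l₂) := by simp
    have hc := hcyc u v l₁ (by rw [hsplit] at hnd; exact hnd.of_append_left)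
      (by rw [hsplit] at hch; exact hch.left_of_append) huv
    have hm := hmx (v :: l₂) ⟨by rw [hsplit'] at hnd; exact hnd.of_append_right,
      by rw [hsplit'] at hch; exact hch.right_of_append, rfl⟩
    have hs := pathSum_append k v l₂ (u :: l₁)
    rw [← hsplit'] at hs
    refine le_trans ?_ hm
    simp only [wt, hs]
    push_cast at hc ⊢
    simp only [List.length_cons, List.length_append]
    push_cast
    linarith
  · have hm := hmx (v :: u :: l) ⟨List.nodup_cons.2 ⟨hmem, hnd⟩,
      List.isChain_cons_cons.2 ⟨huv, hch⟩, rfl⟩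
    refine le_trans (le_of_eq ?_) hm
    simp only [wt, pathSum, List.length_cons]
    push_cast
    ring

/-- Telescoping the strict inequalities of `x` along a path. -/
lemma pathSum_le {V : Type*} (R : V → V → Prop) (k : V → V → ℤ) (x : V → ℝ)
    (hk : ∀ u v, R u v → 2 * (k u v : ℝ) + 1 < x v - x u) (v : V) :
    ∀ (l : List V) (u : V), (u :: l ++ [v]).IsChain (fun a b => R b a) →
      2 * (pathSum k (u :: l ++ [v]) : ℝ) + (l.length + 1) ≤ x u - x v
  | [], u, h => by
    have := hk v u (by simpa using h)
    simp [pathSum]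
    linarith
  | b :: l, u, h => by
    simp only [List.cons_append] at h
    obtain ⟨h1, h2⟩ := List.isChain_cons_cons.1 h
    have ih := pathSum_le R k x hk v l b h2
    have := hk b u h1
    simp only [List.cons_append, pathSum, List.length_cons] at ih ⊢
    push_cast
    linarith

/-! ### Cycle weights below `r = 4` -/

/-- The integrality step: for even `n`, a cycle of length `L ≤ n` whose integer weight satisfies
`2 K + L < 0` has nonpositive weight at `ρ = 2 - 2 / n`. -/
lemma cycle_weight_nonpos (n L : ℕ) (K : ℤ) (hn : 2 ≤ n) (heven : Even n) (hL : L ≤ n)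
    (hK : 2 * K + (L : ℤ) < 0) : (2 - 2 / (n : ℝ)) * (K : ℝ) + L ≤ 0 := by
  have hn0 : (0 : ℝ) < n := by positivity
  have hint : (2 * (n : ℤ) - 2) * K + L * n ≤ 0 := by
    rcases hL.eq_or_lt with rfl | hlt
    · -- For `L = n`, parity improves the bound on `2 K + L` to `-2`.
      obtain ⟨j, hj⟩ := heven
      have : K ≤ -(j : ℤ) - 1 := by omega
      have hj1 : (1 : ℤ) ≤ j := by omega
      subst hj
      push_cast
      nlinarith
    · have h1 : 2 * K ≤ -(L : ℤ) - 1 := by omega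
      have h2 : (L : ℤ) + 1 ≤ n := by omega
      have h3 : (2 : ℤ) ≤ n := by omega
      nlinarith
  have hreal : (2 * (n : ℝ) - 2) * K + L * n ≤ 0 := by exact_mod_cast hint
  have : (2 - 2 / (n : ℝ)) * (K : ℝ) + L = ((2 * (n : ℝ) - 2) * K + L * n) / n := by
    field_simp
  rw [this]
  exact div_nonpos_of_nonpos_of_nonneg hreal hn0.le

/-! ### From potentials to circular colourings -/

/-- Real colours whose differences along edges lie in `[k ρ + 1, (k + 2) ρ - 1]`, with `k` of the
prescribed parity, give a circular `2ρ`-colouring by reduction modulo `2ρ`. -/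
lemma hasCircularColoring_of_potential {V : Type*} (G : SimpleGraph V) (σ : Sym2 V → Bool)
    (ρ : ℝ) (hρ : 1 ≤ ρ) (p : V → ℝ)
    (hp : ∀ u v, G.Adj u v → ∃ k : ℤ, SignParity (σ s(u, v)) k ∧
      k * ρ + 1 ≤ p v - p u ∧ p v - p u ≤ (k + 2) * ρ - 1) :
    HasCircularColoring G σ (2 * ρ) := by
  have hr : 0 < 2 * ρ := by linarith
  refine ⟨fun v => toIcoMod hr 0 (p v), fun v => ?_, fun u v huv => ?_⟩
  · have := toIcoMod_mem_Ico hr 0 (p v)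
    simpa using this
  obtain ⟨k, hk, h1, h2⟩ := hp u v huv
  have hu := toIcoMod_mem_Ico hr 0 (p u)
  have hv := toIcoMod_mem_Ico hr 0 (p v)
  have eu := toIcoMod_add_toIcoDiv_zsmul hr 0 (p u)
  have ev := toIcoMod_add_toIcoDiv_zsmul hr 0 (p v)
  simp only [zsmul_eq_mul] at eu ev
  simp only
  set a := toIcoMod hr 0 (p u)
  set b := toIcoMod hr 0 (p v)
  set i := toIcoDiv hr 0 (p u)
  set j := toIcoDiv hr 0 (p v)
  obtain ⟨hu1, hu2⟩ := hu
  obtain ⟨hv1, hv2⟩ := hv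
  -- The integer attached to the reduced colours.
  obtain ⟨q, hq⟩ : ∃ q : ℤ, q = k + 2 * i - 2 * j := ⟨_, rfl⟩
  have hqr : (q : ℝ) = k + 2 * i - 2 * j := by rw [hq]; push_cast; ring
  have h3 : q * ρ + 1 ≤ b - a := by rw [hqr]; linarith
  have h4 : b - a ≤ (q + 2) * ρ - 1 := by rw [hqr]; linarith
  have hq1 : -4 < q := by
    have : (-4 : ℝ) < q := by
      by_contra! h
      nlinarith
    exact_mod_cast this
  have hq2 : q < 2 := by
    have : (q : ℝ) < 2 := by
      by_contra! h
      nlinarith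
    exact_mod_cast this
  unfold SignParity at hk
  rw [abs_sub_comm]
  split_ifs at hk ⊢ with hb
  · have hq' : q = -2 ∨ q = 0 := by
      obtain ⟨t, rfl⟩ := hk; omega
    rcases hq' with rfl | rfl
    · push_cast at h3 h4
      rw [abs_of_nonpos (by linarith)]
      constructor <;> linarith
    · push_cast at h3 h4
      rw [abs_of_nonneg (by linarith)]
      constructor <;> linarith
  · have hq' : q = -3 ∨ q = -1 ∨ q = 1 := by
      obtain ⟨t, rfl⟩ := hk; omega
    rcases hq' with rfl | rfl | rfl
    · push_cast at h3 h4
      right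
      rw [abs_of_nonpos (by linarith)]
      linarith
    · push_cast at h3 h4
      left
      rw [abs_le]
      constructor <;> linarith
    · push_cast at h3 h4
      right
      rw [abs_of_nonneg (by linarith)]
      linarith

/-! ### The bound on the circular chromatic number -/

/-- If `(G, σ)` is a signed 2-degenerate simple graph on an even number `n ≥ 2` of
vertices, then `χ_c(G, σ) ≤ 4 - 4/n`. -/
theorem circChrom_le_of_twoDegenerate_even
    {V : Type*} [Fintype V] (G : SimpleGraph V) (σ : Sym2 V → Bool) (n : ℕ)
    (hcard : Fintype.card V = n) (heven : Even n) (hn : 2 ≤ n) (hdeg : TwoDegenerate G) :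
    circChrom G σ ≤ ENNReal.ofReal (4 - 4 / (n : ℝ)) := by
  classical
  have hn2 : (2 : ℝ) ≤ n := by exact_mod_cast hn
  have hρ : (1 : ℝ) ≤ 2 - 2 / (n : ℝ) := by
    have : 2 / (n : ℝ) ≤ 1 := by rw [div_le_one (by linarith)]; exact hn2
    linarith
  obtain ⟨x, -, hx⟩ := exists_strict_coloring G σ hdeg Finset.univ
  have hx' : ∀ u v, ∃ k : ℤ, G.Adj u v →
      SignParity (σ s(u, v)) k ∧ 2 * (k : ℝ) + 1 < x v - x u ∧ x v - x u < 2 * k + 3 := by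
    intro u v
    by_cases h : G.Adj u v
    · obtain ⟨k, hk⟩ := hx u (Finset.mem_univ _) v (Finset.mem_univ _) h
      exact ⟨k, fun _ => hk⟩
    · exact ⟨0, fun h' => absurd h' h⟩
  choose k hk using hx'
  obtain ⟨p, hp⟩ := exists_potential G.Adj (fun u => G.loopless.irrefl u) k (2 - 2 / (n : ℝ)) (by
    intro u v l hnd hch huv
    have hlen : l.length + 2 ≤ n := by
      have := hnd.length_le_card
      rw [hcard] at this
      simp at this
      omega
    have h1 := pathSum_le G.Adj k x (fun u v h => (hk u v h).2.1) v l u hch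
    have h2 := (hk u v huv).2.1
    have h3 : 2 * (pathSum k (u :: l ++ [v]) + k u v) + ((l.length + 2 : ℕ) : ℤ) < 0 := by
      have : 2 * ((pathSum k (u :: l ++ [v]) : ℝ) + k u v) + ((l.length : ℝ) + 2) < 0 := by
        linarith
      exact_mod_cast this
    have := cycle_weight_nonpos n (l.length + 2) _ hn heven hlen h3
    push_cast at this ⊢
    exact this)
  have hcol : HasCircularColoring G σ (2 * (2 - 2 / (n : ℝ))) := by
    refine hasCircularColoring_of_potential G σ _ hρ p fun u v huv => ?_
    obtain ⟨hpar, h1, h2⟩ := hk u v huv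
    obtain ⟨-, h3, h4⟩ := hk v u huv.symm
    -- The two arcs of an edge carry integers with sum `-2`.
    have hsum : k v u = -k u v - 2 := by
      have h5 : (k u v : ℝ) + k v u < -1 := by linarith
      have h6 : (-3 : ℝ) < k u v + k v u := by linarith
      have h5' : k u v + k v u < -1 := by exact_mod_cast h5
      have h6' : -3 < k u v + k v u := by exact_mod_cast h6
      omega
    refine ⟨k u v, hpar, ?_, ?_⟩
    · linarith [hp u v huv]
    · have := hp v u huv.symm
      rw [hsum] at this
      push_cast at this
      linarith
  have heq : 2 * (2 - 2 / (n : ℝ)) = 4 - 4 / n := by ring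
  rw [heq] at hcol
  exact sInf_le ⟨4 - 4 / (n : ℝ), ⟨by linarith, hcol⟩, rfl⟩
end

section
/- Let Ĝ be a signed graph with a positive edge uv, and let F_{uv}(Ĝ) be the signed graph obtained from Ĝ by: adding a copy u' of u (joined to each neighbor w of u by an edge of the same sign as uw), adding a copy v' of v (joined to each neighbor w of v by an edge of the same sign as vw), and adding two new vertices x and y with xu and yv positive edges and xu', yv', xy negative edges. If χ_c(Ĝ) < 4, then χ_c(F_{uv}(Ĝ)) < 4. -/
/-!
View the colors as points of a circle of circumference `r`: a positive edge says that its ends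
are at circular distance at least `1`, a negative edge that one end is at distance at least `1`
from the antipode of the other (`FarMod`, `IsCircularColoring.farMod`,
`hasCircularColoring_of_farMod`).

Stretching a circular `r`-coloring of `Ĝ`, `r < 4`, by a factor `k > 1` gives a circular
`k * r`-coloring in which every constraint has slack `k - 1`. Take `k = 5 / (r + 1)`, so that
`k * r = 4 - 2 * s` with `s = (k - 1) / 2 > 0`: the slack is then enough to move both copies by `s`.
The colors `u + s` for `u'`, `v - s` for `v'`, `u + 1` for `x` and `v - 1` for `y` (writing a
vertex for its color) extend the coloring to `F_{uv}(Ĝ)`: the move makes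
`x` at distance `1` from `u` but only `1 - s = k * r / 2 - 1` from `u'`, likewise for `y`, and
the constraint of the negative edge `xy` is that of the positive edge `uv` up to an error `s`
(`hasCircularColoring_fuv`).
-/

open scoped ENNReal

/-- Base relation describing the edges of `F_{uv}(Ĝ)` on the vertex set `V ⊕ Fin 4`,
where `Sum.inr 0 = u'` (the copy of `u`), `Sum.inr 1 = v'` (the copy of `v`),
`Sum.inr 2 = x` and `Sum.inr 3 = y`:
original edges of `G`; `u'` joined to every neighbor of `u` and `v'` to every neighbor
of `v` (so in particular `u'v` , `v'u` and `u'v'` are edges); and the new edges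
`xu`, `xu'`, `yv`, `yv'`, `xy`. -/
def fuvRel {V : Type*} (G : SimpleGraph V) (u v : V) :
    V ⊕ Fin 4 → V ⊕ Fin 4 → Prop
  | Sum.inl a, Sum.inl b => G.Adj a b
  | Sum.inl w, Sum.inr i =>
      (i = 0 ∧ G.Adj u w) ∨ (i = 1 ∧ G.Adj v w) ∨ (i = 2 ∧ w = u) ∨ (i = 3 ∧ w = v)
  | Sum.inr _, Sum.inl _ => False
  | Sum.inr i, Sum.inr j =>
      (i = 0 ∧ j = 1) ∨ (i = 0 ∧ j = 2) ∨ (i = 1 ∧ j = 3) ∨ (i = 2 ∧ j = 3)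

/-- The underlying simple graph of `F_{uv}(Ĝ)`. -/
def FuvGraph {V : Type*} (G : SimpleGraph V) (u v : V) : SimpleGraph (V ⊕ Fin 4) :=
  SimpleGraph.fromRel (fuvRel G u v)

/-- Positivity of pairs in `F_{uv}(Ĝ)`: original edges keep their sign; the copy `u'`
sees each neighbor `w` of `u` with the sign of `uw` and `v'` sees each neighbor `w` of
`v` with the sign of `vw` (in particular `u'v'` is positive, as `uv` is); `xu` and `yv`
are positive while `xu'`, `yv'` and `xy` are negative. -/
def fuvPosB {V : Type*} [DecidableEq V] (σ : Sym2 V → Bool) (u v : V) :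
    V ⊕ Fin 4 → V ⊕ Fin 4 → Bool
  | Sum.inl a, Sum.inl b => σ s(a, b)
  | Sum.inl w, Sum.inr i =>
      (decide (i = 0) && σ s(u, w)) || (decide (i = 1) && σ s(v, w)) ||
      (decide (i = 2) && decide (w = u)) || (decide (i = 3) && decide (w = v))
  | Sum.inr _, Sum.inl _ => false
  | Sum.inr i, Sum.inr j => (decide (i = 0) && decide (j = 1)) ||
      (decide (i = 1) && decide (j = 0))

/-- The signature of `F_{uv}(Ĝ)`. -/
def fuvSign {V : Type*} [DecidableEq V] (σ : Sym2 V → Bool) (u v : V) :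
    Sym2 (V ⊕ Fin 4) → Bool :=
  Sym2.lift ⟨fun a b => fuvPosB σ u v a b || fuvPosB σ u v b a,
    fun _ _ => Bool.or_comm _ _⟩

/-- `d`, read on the circle `ℝ / rℤ`, is at distance at least `c` from `0`. -/
def FarMod (r c d : ℝ) : Prop := ∀ n : ℤ, c ≤ |d + n * r|

lemma farMod_of_mem {r c d : ℝ} (hr : 0 ≤ r) (h1 : c ≤ d) (h2 : d ≤ r - c) : FarMod r c d := by
  intro n
  rcases le_or_gt 0 n with hn | hn
  · have : (0 : ℝ) ≤ n := by exact_mod_cast hn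
    exact le_trans (by nlinarith) (le_abs_self _)
  · have : (n : ℝ) ≤ -1 := by exact_mod_cast Int.le_sub_one_of_lt hn
    exact le_trans (by nlinarith) (neg_le_abs _)

lemma FarMod.neg {r c d : ℝ} (h : FarMod r c d) : FarMod r c (-d) := by
  intro n
  have := h (-n)
  rw [← abs_neg] at this
  convert this using 2
  push_cast; ring

lemma FarMod.shift {r c d : ℝ} (h : FarMod r c d) (m : ℤ) : FarMod r c (d + m * r) := by
  intro n
  convert h (m + n) using 2
  push_cast; ring

lemma FarMod.perturb {r c c' d d' : ℝ} (h : FarMod r c d) (hd : |d - d'| ≤ c - c') :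
    FarMod r c' d' := by
  intro n
  have h1 := h n
  have h2 := abs_sub_abs_le_abs_sub (d + n * r) (d' + n * r)
  rw [add_sub_add_right_eq_sub] at h2
  linarith

lemma FarMod.scale {r c d k : ℝ} (h : FarMod r c d) (hk : 0 ≤ k) :
    FarMod (k * r) (k * c) (k * d) := by
  intro n
  have : k * d + n * (k * r) = k * (d + n * r) := by ring
  rw [this, abs_mul, abs_of_nonneg hk]
  exact mul_le_mul_of_nonneg_left (h n) hk

lemma IsCircularColoring.farMod {V : Type*} {G : SimpleGraph V} {σ : Sym2 V → Bool} {r : ℝ}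
    {f : V → ℝ} (hf : IsCircularColoring G σ r f) (hr : 0 ≤ r) {a b : V} (hab : G.Adj a b) :
    FarMod r 1 (f a - f b + if σ s(a, b) then 0 else r / 2) := by
  have h := hf.2 a b hab
  have ha := hf.1 a
  have hb := hf.1 b
  split_ifs at h ⊢ with hs
  · rw [add_zero]
    rcases le_total 0 (f a - f b) with h0 | h0
    · rw [abs_of_nonneg h0] at h
      exact farMod_of_mem hr h.1 h.2
    · rw [abs_of_nonpos h0] at h
      simpa using (farMod_of_mem hr h.1 h.2).neg
  · rcases h with h | h
    · rw [abs_le] at h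
      exact farMod_of_mem hr (by linarith) (by linarith)
    · rcases le_abs.1 h with h | h
      · -- here `f a - f b + r / 2` lies in `[r + 1, 2 * r - 1]`, one turn too far
        have := (farMod_of_mem (c := 1) (d := f a - f b - r / 2) hr
          (by linarith) (by linarith)).shift 1
        convert this using 1
        push_cast; ring
      · -- here `f a - f b + r / 2` lies in `[1 - r, -1]`, one turn too short
        have := (farMod_of_mem (c := 1) (d := f a - f b + r / 2 + r) hr
          (by linarith) (by linarith)).shift (-1)
        convert this using 1
        push_cast; ring

/-- Reducing real-valued colors modulo `r` into `[0, r)` turns a solution of the constraints on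
the circle into a circular `r`-coloring. -/
lemma hasCircularColoring_of_farMod {V : Type*} {G : SimpleGraph V} {σ : Sym2 V → Bool} {r : ℝ}
    (hr : 0 < r) (f : V → ℝ)
    (h : ∀ a b, G.Adj a b → FarMod r 1 (f a - f b + if σ s(a, b) then 0 else r / 2)) :
    HasCircularColoring G σ r := by
  refine ⟨fun a => toIcoMod hr 0 (f a), fun a => by simpa using toIcoMod_mem_Ico hr 0 (f a), ?_⟩
  intro a b hab
  have ha := toIcoMod_mem_Ico hr 0 (f a)
  have hb := toIcoMod_mem_Ico hr 0 (f b)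
  have key : FarMod r 1 (toIcoMod hr 0 (f a) - toIcoMod hr 0 (f b)
      + if σ s(a, b) then 0 else r / 2) := by
    convert (h a b hab).shift (toIcoDiv hr 0 (f b) - toIcoDiv hr 0 (f a)) using 1
    simp only [toIcoMod, zsmul_eq_mul]
    push_cast; ring
  rw [zero_add] at ha hb
  beta_reduce
  obtain ⟨ha0, har⟩ := ha
  obtain ⟨hb0, hbr⟩ := hb
  generalize toIcoMod hr 0 (f a) = p at *
  generalize toIcoMod hr 0 (f b) = q at *
  -- Only the representatives of the difference nearest to `0` matter.
  have h0 := key 0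
  have h1 := key 1
  have h2 := key (-1)
  push_cast at h0 h1 h2
  split_ifs at h0 h1 h2 ⊢ with hs
  · rw [le_abs] at h0 h1 h2
    rw [le_abs, abs_le]
    refine ⟨?_, ?_, ?_⟩
    · rcases h0 with h | h <;> [left; right] <;> linarith
    · rcases h1 with h | h <;> linarith
    · rcases h2 with h | h <;> linarith
  · rw [le_abs] at h0 h2
    rw [le_abs, abs_le]
    rcases h0 with h0 | h0
    · rcases h2 with h2 | h2
      · right; left; linarith
      · left; constructor <;> linarith
    · right; right; linarith

/-- A coloring of `Ĝ` on the circle of circumference `R = 5 - k`, `1 ≤ k ≤ 5 / 3`, whose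
constraints all hold with `k` in place of `1` extends to a circular `R`-coloring of `F_{uv}(Ĝ)`.
The copies `u'` and `v'` move away from `u` and `v` by `(k - 1) / 2` each, so that the edge `u'v'`
uses up exactly the slack `k - 1`. -/
lemma hasCircularColoring_fuv {V : Type*} [DecidableEq V] (G : SimpleGraph V)
    (σ : Sym2 V → Bool) (u v : V) (huv : G.Adj u v) (hpos : σ s(u, v) = true)
    (R k : ℝ) (hR : R = 5 - k) (hk1 : 1 ≤ k) (hk2 : 3 * k ≤ 5) (f : V → ℝ)
    (hf : ∀ a b, G.Adj a b → FarMod R k (f a - f b + if σ s(a, b) then 0 else R / 2)) :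
    HasCircularColoring (FuvGraph G u v) (fuvSign σ u v) R := by
  have hR0 : 0 ≤ R := by linarith
  let g : V ⊕ Fin 4 → ℝ := Sum.elim f
    ![f u + (k - 1) / 2, f v - (k - 1) / 2, f u + 1, f v - 1]
  have huv' : FarMod R k (f u - f v) := by simpa [hpos] using hf u v huv
  have main : ∀ a b, fuvRel G u v a b →
      FarMod R 1 (g a - g b + if fuvSign σ u v s(a, b) then 0 else R / 2) := by
    rintro (a | i) (b | j) hab
    · have := (hf a b hab).perturb (c' := 1) (d' := _) (by rw [sub_self, abs_zero]; linarith)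
      simpa [g, fuvSign, fuvPosB, Sym2.eq_swap (a := b) (b := a)] using this
    · rcases hab with ⟨rfl, h⟩ | ⟨rfl, h⟩ | ⟨rfl, rfl⟩ | ⟨rfl, rfl⟩
      · have h := hf a u h.symm
        simp only [g, fuvSign, fuvPosB, Sym2.lift_mk, Sum.elim_inl, Sum.elim_inr]
        simp [Sym2.eq_swap (a := u) (b := a)]
        refine h.perturb ?_
        rw [abs_le]; constructor <;> linarith
      · have h := hf a v h.symm
        simp only [g, fuvSign, fuvPosB, Sym2.lift_mk, Sum.elim_inl, Sum.elim_inr]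
        simp [Sym2.eq_swap (a := v) (b := a)]
        refine h.perturb ?_
        rw [abs_le]; constructor <;> linarith
      · simpa [g, fuvSign, fuvPosB] using
          (farMod_of_mem (c := 1) (d := 1) hR0 le_rfl (by linarith)).neg
      · simpa [g, fuvSign, fuvPosB] using
          farMod_of_mem (c := 1) (d := 1) hR0 le_rfl (by linarith)
    · exact hab.elim
    · rcases hab with ⟨rfl, rfl⟩ | ⟨rfl, rfl⟩ | ⟨rfl, rfl⟩ | ⟨rfl, rfl⟩
      · simp [g, fuvSign, fuvPosB]
        refine huv'.perturb ?_
        rw [abs_le]; constructor <;> linarith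
      · simp [g, fuvSign, fuvPosB]
        exact farMod_of_mem hR0 (by linarith) (by linarith)
      · simp [g, fuvSign, fuvPosB]
        exact farMod_of_mem hR0 (by linarith) (by linarith)
      · simp [g, fuvSign, fuvPosB]
        -- Modulo `R`, `x - y + R / 2` is `u - v` up to `(k - 1) / 2`, because `4 - R = k - 1`.
        refine (huv'.shift 1).perturb ?_
        push_cast
        rw [abs_le]; constructor <;> linarith
  refine hasCircularColoring_of_farMod (by linarith) g fun a b hab => ?_
  rcases ((SimpleGraph.fromRel_adj _ _ _).1 hab).2 with h | h
  · exact main a b h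
  · have := (main b a h).neg
    rw [Sym2.eq_swap]
    split_ifs at this ⊢ with hs
    · convert this using 1; ring
    · -- `R / 2` and `-R / 2` are the same point of the circle
      convert this.shift 1 using 1
      push_cast; ring

/-- If `uv` is a positive edge of the signed graph `Ĝ = (G, σ)` and `χ_c(Ĝ) < 4`, then
`χ_c(F_{uv}(Ĝ)) < 4`. -/
theorem circChrom_fuv_lt_four
    {V : Type*} [Fintype V] [DecidableEq V] (G : SimpleGraph V) (σ : Sym2 V → Bool)
    (u v : V) (huv : G.Adj u v) (hpos : σ s(u, v) = true)
    (h : circChrom G σ < 4) :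
    circChrom (FuvGraph G u v) (fuvSign σ u v) < 4 := by
  obtain ⟨_, ⟨r, ⟨hr2, f, hf⟩, rfl⟩, hr4⟩ := sInf_lt_iff.1 h
  have hr4 : r < 4 := by
    have : ENNReal.ofReal r < ENNReal.ofReal 4 := by simpa using hr4
    exact (ENNReal.ofReal_lt_ofReal_iff (by norm_num)).1 this
  -- `k = 5 / (r + 1)` is the scale at which the gap `4 - k * r` equals the slack `k - 1`.
  obtain ⟨k, hk⟩ : ∃ k : ℝ, k * (r + 1) = 5 :=
    ⟨5 / (r + 1), div_mul_cancel₀ _ (by linarith)⟩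
  have hk1 : 1 < k := by nlinarith
  have hk2 : 3 * k ≤ 5 := by nlinarith
  have hcol := hasCircularColoring_fuv G σ u v huv hpos (k * r) k (by linarith) hk1.le hk2
    (fun a => k * f a) (fun a b hab => by
      have := (hf.farMod (by linarith) hab).scale (k := k) (by linarith)
      rw [mul_one] at this
      convert this using 1
      split_ifs <;> ring)
  have h4 : k * r < 4 := by linarith
  calc circChrom (FuvGraph G u v) (fuvSign σ u v) ≤ ENNReal.ofReal (k * r) :=
        sInf_le ⟨_, ⟨by linarith, hcol⟩, rfl⟩
    _ < ENNReal.ofReal 4 := (ENNReal.ofReal_lt_ofReal_iff (by norm_num)).2 h4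
    _ = 4 := by simp
end
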